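/- arXiv:1905.08852 — 2 statements merged into one kernel-verified Lean document; each statement's English description precedes it below -/
import Mathlib

section
/- Let V : ℝ → ℝ be continuous, E ∈ ℝ, n ∈ ℕ, and let ψ : ℝ → ℝ be twice continuously differentiable, square-integrable, with ψ(x) → 0 and ψ'(x) → 0 as x → ±∞, satisfying −ψ'' + Vψ = Eψ, and having exactly n zeros y₁ < ⋯ < yₙ, each simple (ψ'(yᵢ) ≠ 0), with ψ changing sign at each yᵢ. Let φ : ℝ → ℝ be twice continuously differentiable, vanishing only at isolated points, with exactly n sign changes: there exist z₁ < ⋯ < zₙ such that (−1)^i·φ(x) ≥ 0 for all x in the interval (zᵢ, zᵢ₊₁) for i = 0, …, n (with z₀ = −∞, zₙ₊₁ = +∞). Assume the functions ψφ and ψ·(−φ'' + Vφ) are integrable on ℝ and ψ(x)φ'(x) − ψ'(x)φ(x) → 0 as x → ±∞. Then for every real m with m ≤ (−φ''(x) + V(x)φ(x))/φ(x) for all x with φ(x) ≠ 0, one has m ≤ E. -/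
open Filter MeasureTheory

/-! Suppose `E < m`. The `n + 1` nodal intervals of `ψ` are disjoint, so one of them, `I`, contains
none of the `n` points at which `φ` changes sign; after replacing `ψ` by `-ψ` if necessary,
`ψ φ ≥ 0` on `I`. By Lagrange's identity the Wronskian `W = ψ φ' - ψ' φ` satisfies
`W' = (E - Hφ / φ) ψ φ ≤ (E - m) ψ φ ≤ 0` there, so `W` decreases along `I`. At an endpoint of `I`
where `ψ = 0` we have `W = -(ψ φ)'`, and `ψ φ` attains its minimum `0` over the closure of `I`
there; hence `W ≤ 0` at the left end of `I` and `W ≥ 0` at the right end, the decay of `W` giving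
this at infinite ends. So `W`, and with it `W'`, vanishes on `I`, which forces `ψ φ = 0` on `I`. -/

theorem exists_disjoint_range_of_card_lt {ι κ X : Type*} [Fintype ι] [Fintype κ] {s : ι → Set X}
    (hs : Pairwise (Function.onFun Disjoint s)) (z : κ → X)
    (hcard : Fintype.card κ < Fintype.card ι) : ∃ i, Disjoint (s i) (Set.range z) := by
  by_contra! hmeet
  have hmem : ∀ i, ∃ j, z j ∈ s i := fun i => by
    obtain ⟨_, hx, j, rfl⟩ := Set.not_disjoint_iff.1 (hmeet i)
    exact ⟨j, hx⟩
  choose g hg using hmem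
  obtain ⟨i, i', hne, heq⟩ := Fintype.exists_ne_map_eq_of_card_lt g hcard
  exact Set.disjoint_left.1 (hs hne) (hg i) (heq ▸ hg i')

section Gaps

variable {α : Type*} [LinearOrder α] {n : ℕ} {y : Fin n → α}

/-- For increasing `y`, the `i`-th of the `n + 1` open intervals into which the points
`y 0 < ⋯ < y (n - 1)` cut the line, counted from the left starting with `i = 0`. -/
def gap (y : Fin n → α) (i : Fin (n + 1)) : Set α :=
  {x | (∀ j, j.castSucc < i → y j < x) ∧ ∀ j, i ≤ j.castSucc → x < y j}

theorem gap_eq_inter (y : Fin n → α) (i : Fin (n + 1)) :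
    gap y i = (⋂ (j) (_ : j.castSucc < i), Set.Ioi (y j)) ∩
      ⋂ (j) (_ : i ≤ j.castSucc), Set.Iio (y j) := by
  ext x
  simp [gap]

theorem ordConnected_gap (y : Fin n → α) (i : Fin (n + 1)) : (gap y i).OrdConnected := by
  rw [gap_eq_inter]
  exact (Set.ordConnected_biInter fun _ _ => Set.ordConnected_Ioi).inter
    (Set.ordConnected_biInter fun _ _ => Set.ordConnected_Iio)

theorem notMem_gap (y : Fin n → α) (i : Fin (n + 1)) (j : Fin n) : y j ∉ gap y i := fun h =>
  (lt_or_ge j.castSucc i).elim (fun hj => (h.1 j hj).false) fun hj => (h.2 j hj).false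

theorem pairwise_disjoint_gap (y : Fin n → α) : Pairwise (Function.onFun Disjoint (gap y)) :=
  Pairwise.of_lt fun i i' h => Set.disjoint_left.2 fun x hx hx' => by
    obtain ⟨j, rfl⟩ := Fin.exists_castSucc_eq.2 (Fin.ne_last_of_lt h)
    exact lt_asymm (hx.2 j le_rfl) (hx'.1 j h)

theorem exists_mem_gap (hy : Monotone y) {x : α} (hx : x ∉ Set.range y) : ∃ i, x ∈ gap y i := by
  obtain ⟨i, hi, hmax⟩ := (Set.toFinite {i | ∀ j : Fin n, j.castSucc < i → y j < x}).exists_maximal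
    ⟨0, fun j hj => absurd hj (Fin.not_lt_zero _)⟩
  refine ⟨i, hi, fun j hij => ?_⟩
  by_contra! hle
  have hlt : y j < x := hle.lt_of_ne fun h => hx ⟨j, h⟩
  have hsucc : j.succ ≤ i := hmax
    (fun j' hj' => (hy (Fin.castSucc_lt_succ_iff.1 hj')).trans_lt hlt)
    (hij.trans j.castSucc_lt_succ.le)
  exact (j.castSucc_lt_succ.trans_le hsucc).not_ge hij

theorem exists_subset_gap (hy : Monotone y) {s : Set α} (hs : s.OrdConnected) (hne : s.Nonempty)
    (hdisj : Disjoint s (Set.range y)) : ∃ i, s ⊆ gap y i := by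
  obtain ⟨x, hx⟩ := hne
  obtain ⟨i, hi⟩ := exists_mem_gap hy (Set.disjoint_left.1 hdisj hx)
  have hy_notMem (j : Fin n) : y j ∉ s := fun h => Set.disjoint_left.1 hdisj h ⟨j, rfl⟩
  refine ⟨i, fun t ht => ⟨fun j hj => ?_, fun j hj => ?_⟩⟩
  · by_contra! h
    exact hy_notMem j (hs.out ht hx ⟨h, (hi.1 j hj).le⟩)
  · by_contra! h
    exact hy_notMem j (hs.out hx ht ⟨(hi.2 j hj).le, h⟩)

theorem gap_nonempty [DenselyOrdered α] [NoMinOrder α] [NoMaxOrder α] [Nonempty α]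
    (hy : StrictMono y) (i : Fin (n + 1)) : (gap y i).Nonempty := by
  obtain ⟨x, hlo, hhi⟩ := Order.exists_between_finsets
    (lo := (Finset.univ.filter fun j : Fin n => j.castSucc < i).image y)
    (hi := (Finset.univ.filter fun j : Fin n => i ≤ j.castSucc).image y) (by
      simp only [Finset.forall_mem_image, Finset.mem_filter_univ]
      exact fun j hj j' hj' => hy (Fin.castSucc_lt_castSucc_iff.1 (hj.trans_le hj')))
  simp only [Finset.forall_mem_image, Finset.mem_filter_univ] at hlo hhi
  exact ⟨x, fun _ hj => hlo hj, fun _ hj => hhi hj⟩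

variable [TopologicalSpace α] [OrderClosedTopology α]

theorem isOpen_gap (y : Fin n → α) (i : Fin (n + 1)) : IsOpen (gap y i) := by
  rw [gap_eq_inter]
  exact (isOpen_iInter_of_finite fun _ => isOpen_iInter_of_finite fun _ => isOpen_Ioi).inter
    (isOpen_iInter_of_finite fun _ => isOpen_iInter_of_finite fun _ => isOpen_Iio)

theorem frontier_gap_subset (y : Fin n → α) (i : Fin (n + 1)) :
    frontier (gap y i) ⊆ Set.range y := by
  rw [(isOpen_gap y i).frontier_eq]
  rintro x ⟨hcl, hx⟩
  by_contra hrange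
  refine hx ⟨fun j hj => ?_, fun j hj => ?_⟩
  · exact (closure_minimal (fun t ht => (ht.1 j hj).le) isClosed_Ici hcl : y j ≤ x).lt_of_ne
      fun h => hrange ⟨j, h⟩
  · exact (closure_minimal (fun t ht => (ht.2 j hj).le) isClosed_Iic hcl : x ≤ y j).lt_of_ne'
      fun h => hrange ⟨j, h⟩

end Gaps

section Topology

variable {X α : Type*} [TopologicalSpace X] {s t : Set X}

theorem subset_or_inter_frontier_nonempty (hs : IsPreconnected s) (hst : (s ∩ t).Nonempty) :
    s ⊆ t ∨ (s ∩ frontier t).Nonempty := by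
  refine or_iff_not_imp_right.2 fun h => ?_
  have hcover : s ⊆ interior t ∪ interior tᶜ := by
    rw [← compl_frontier_eq_union_interior]
    exact fun x hx hxt => h ⟨x, hx, hxt⟩
  have hdisj : Disjoint (interior t) (interior tᶜ) :=
    disjoint_compl_right.mono interior_subset interior_subset
  obtain ⟨x, hxs, hxt⟩ := hst
  have hxint : x ∈ interior t :=
    (hcover hxs).resolve_right fun hx => interior_subset hx hxt
  exact (hs.subset_left_of_subset_union isOpen_interior isOpen_interior hdisj hcover
    ⟨x, hxs, hxint⟩).trans interior_subset

theorem forall_pos_or_forall_neg_of_isPreconnected [TopologicalSpace α] [LinearOrder α]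
    [OrderClosedTopology α] [Zero α] {f : X → α} (hs : IsPreconnected s) (hf : ContinuousOn f s)
    (hne : ∀ x ∈ s, f x ≠ 0) : (∀ x ∈ s, 0 < f x) ∨ ∀ x ∈ s, f x < 0 := by
  by_contra! ⟨⟨a, ha, hfa⟩, b, hb, hfb⟩
  obtain ⟨c, hc, hfc⟩ := hs.intermediate_value ha hb hf ⟨hfa, hfb⟩
  exact hne c hc hfc

theorem dense_ne_zero_of_isolated_zeros {X M : Type*} [PseudoMetricSpace X]
    [∀ x : X, NeBot (nhdsWithin x {x}ᶜ)] [Zero M] {f : X → M}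
    (hiso : ∀ x, f x = 0 → ∃ ε > 0, ∀ t, t ≠ x → dist t x < ε → f t ≠ 0) :
    Dense {x | f x ≠ 0} := by
  intro x
  by_cases hx : f x = 0
  · obtain ⟨ε, hε, hne⟩ := hiso x hx
    have hev : ∀ᶠ t in nhdsWithin x {x}ᶜ, f t ≠ 0 :=
      eventually_nhdsWithin_iff.2 <|
        (Metric.eventually_nhds_iff.2 ⟨ε, hε, fun _ hdist htx => hne _ htx hdist⟩)
    exact mem_closure_iff_frequently.2 (hev.frequently.filter_mono nhdsWithin_le_nhds)
  · exact subset_closure hx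

end Topology

/-- The Schrödinger operator `H = -d²/dx² + V`. It is meant for functions of class `C²`, on which
`deriv` is not a junk value. -/
noncomputable def schrodingerOp (V f : ℝ → ℝ) (x : ℝ) : ℝ :=
  -deriv (deriv f) x + V x * f x

/-- The Wronskian `f g' - f' g` of two differentiable functions. -/
noncomputable def wronskian (f g : ℝ → ℝ) (x : ℝ) : ℝ :=
  f x * deriv g x - deriv f x * g x

/-- `I` is a nodal interval of `ψ`: a maximal open interval, possibly unbounded, without zeros of
`ψ`. Maximality is expressed by the vanishing of `ψ` on the frontier, that is, at the finite
endpoints of `I`. -/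
structure IsNodalInterval (ψ : ℝ → ℝ) (I : Set ℝ) : Prop where
  isOpen : IsOpen I
  nonempty : I.Nonempty
  ordConnected : I.OrdConnected
  ne_zero : ∀ x ∈ I, ψ x ≠ 0
  eq_zero_of_mem_frontier : ∀ x ∈ frontier I, ψ x = 0

theorem isNodalInterval_gap {ψ : ℝ → ℝ} {n : ℕ} {y : Fin n → ℝ} (hy : StrictMono y)
    (hzero : ∀ i, ψ (y i) = 0) (hall : ∀ x, ψ x = 0 → ∃ i, x = y i) (i : Fin (n + 1)) :
    IsNodalInterval ψ (gap y i) where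
  isOpen := isOpen_gap y i
  nonempty := gap_nonempty hy i
  ordConnected := ordConnected_gap y i
  ne_zero x hx h0 := by
    obtain ⟨j, rfl⟩ := hall x h0
    exact notMem_gap y i j hx
  eq_zero_of_mem_frontier x hx := by
    obtain ⟨j, rfl⟩ := frontier_gap_subset y i hx
    exact hzero j

section Wronskian

variable {V ψ φ : ℝ → ℝ} {E m : ℝ} {I : Set ℝ}

theorem schrodingerOp_neg (V ψ : ℝ → ℝ) (x : ℝ) :
    schrodingerOp V (-ψ) x = -schrodingerOp V ψ x := by
  have hderiv : deriv (-ψ) = -deriv ψ := funext fun _ => deriv.neg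
  simp only [schrodingerOp, hderiv, deriv.neg, Pi.neg_apply]
  ring

theorem wronskian_neg_left (ψ φ : ℝ → ℝ) : wronskian (-ψ) φ = fun x => -wronskian ψ φ x := by
  ext x
  simp only [wronskian, deriv.neg, Pi.neg_apply]
  ring

theorem contDiff_wronskian (hψ : ContDiff ℝ 2 ψ) (hφ : ContDiff ℝ 2 φ) :
    ContDiff ℝ 1 (wronskian ψ φ) :=
  ((hψ.of_le one_le_two).mul hφ.deriv').sub (hψ.deriv'.mul (hφ.of_le one_le_two))

theorem deriv_wronskian (hψ : ContDiff ℝ 2 ψ) (hφ : ContDiff ℝ 2 φ) (V : ℝ → ℝ) (x : ℝ) :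
    deriv (wronskian ψ φ) x = schrodingerOp V ψ x * φ x - ψ x * schrodingerOp V φ x := by
  have hasDerivAt {f : ℝ → ℝ} (hf : ContDiff ℝ 2 f) : HasDerivAt f (deriv f x) x :=
    (hf.differentiable two_ne_zero x).hasDerivAt
  have hasDerivAt_deriv {f : ℝ → ℝ} (hf : ContDiff ℝ 2 f) :
      HasDerivAt (deriv f) (deriv (deriv f) x) x :=
    (hf.deriv'.differentiable one_ne_zero x).hasDerivAt
  have hW : HasDerivAt (wronskian ψ φ) _ x :=
    ((hasDerivAt hψ).mul (hasDerivAt_deriv hφ)).sub ((hasDerivAt_deriv hψ).mul (hasDerivAt hφ))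
  rw [hW.deriv, schrodingerOp, schrodingerOp]
  ring

theorem deriv_wronskian_le_of_le_localEnergy (hψ : ContDiff ℝ 2 ψ) (hφ : ContDiff ℝ 2 φ) {x : ℝ}
    (heq : schrodingerOp V ψ x = E * ψ x) (hφx : φ x ≠ 0) (hm : m ≤ schrodingerOp V φ x / φ x)
    (hnn : 0 ≤ ψ x * φ x) :
    deriv (wronskian ψ φ) x ≤ (E - m) * (ψ x * φ x) :=
  calc
    deriv (wronskian ψ φ) x = E * ψ x * φ x - ψ x * schrodingerOp V φ x := by
      rw [deriv_wronskian hψ hφ V, heq]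
    _ = (E - schrodingerOp V φ x / φ x) * (ψ x * φ x) := by field_simp
    _ ≤ (E - m) * (ψ x * φ x) := by gcongr

theorem deriv_wronskian_le_on_closure (hψ : ContDiff ℝ 2 ψ) (hφ : ContDiff ℝ 2 φ) (hI : IsOpen I)
    (hdense : Dense {x | φ x ≠ 0}) (heq : ∀ x ∈ I, schrodingerOp V ψ x = E * ψ x)
    (hm : ∀ x ∈ I, φ x ≠ 0 → m ≤ schrodingerOp V φ x / φ x) (hnn : ∀ x ∈ I, 0 ≤ ψ x * φ x) :
    ∀ x ∈ closure I, deriv (wronskian ψ φ) x ≤ (E - m) * (ψ x * φ x) := by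
  have hle : ∀ x ∈ I ∩ {x | φ x ≠ 0},
      deriv (wronskian ψ φ) x ≤ (E - m) * (ψ x * φ x) := fun x ⟨hxI, hφx⟩ =>
    deriv_wronskian_le_of_le_localEnergy hψ hφ (heq x hxI) hφx (hm x hxI hφx) (hnn x hxI)
  have hcl : closure I ⊆ closure (I ∩ {x | φ x ≠ 0}) :=
    closure_minimal (hdense.open_subset_closure_inter hI) isClosed_closure
  exact fun x hx => le_on_closure hle
    ((contDiff_wronskian hψ hφ).continuous_deriv le_rfl).continuousOn
    (continuous_const.mul (hψ.continuous.mul hφ.continuous)).continuousOn (hcl hx)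

theorem antitoneOn_wronskian (hψ : ContDiff ℝ 2 ψ) (hφ : ContDiff ℝ 2 φ) {s : Set ℝ}
    (hs : Convex ℝ s) (hEm : E ≤ m) (hnn : ∀ x ∈ s, 0 ≤ ψ x * φ x)
    (hle : ∀ x ∈ s, deriv (wronskian ψ φ) x ≤ (E - m) * (ψ x * φ x)) :
    AntitoneOn (wronskian ψ φ) s := by
  have hW := contDiff_wronskian hψ hφ
  refine antitoneOn_of_deriv_nonpos hs hW.continuous.continuousOn
    (hW.differentiable one_ne_zero).differentiableOn fun x hx => ?_
  have hxs := interior_subset hx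
  exact (hle x hxs).trans (mul_nonpos_of_nonpos_of_nonneg (sub_nonpos.2 hEm) (hnn x hxs))

theorem wronskian_mul_sub_nonpos {s : Set ℝ} {a x : ℝ} (hψ : DifferentiableAt ℝ ψ a)
    (hφ : DifferentiableAt ℝ φ a) (hs : Convex ℝ s) (hnn : ∀ x ∈ s, 0 ≤ ψ x * φ x)
    (ha : a ∈ s) (hx : x ∈ s) (hψa : ψ a = 0) : wronskian ψ φ a * (x - a) ≤ 0 := by
  have hmin : IsMinOn (ψ * φ) s a := fun t ht => by simpa [hψa] using hnn t ht
  have hderiv : HasDerivAt (ψ * φ) (-wronskian ψ φ a) a :=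
    (hψ.hasDerivAt.mul hφ.hasDerivAt).congr_deriv (by simp [wronskian, hψa])
  have hdir := hmin.localize.hasFDerivWithinAt_nonneg hderiv.hasFDerivAt.hasFDerivWithinAt
    (sub_mem_posTangentConeAt_of_segment_subset (hs.segment_subset ha hx))
  have hdir' : 0 ≤ (x - a) * -wronskian ψ φ a := by simpa using hdir
  linarith

theorem wronskian_nonpos_of_antitoneOn (hψ : Differentiable ℝ ψ) (hφ : Differentiable ℝ φ)
    (hI : IsNodalInterval ψ I) (hnn : ∀ x ∈ closure I, 0 ≤ ψ x * φ x)
    (hanti : AntitoneOn (wronskian ψ φ) (closure I))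
    (hbot : Tendsto (wronskian ψ φ) atBot (nhds 0)) {x : ℝ} (hx : x ∈ I) :
    wronskian ψ φ x ≤ 0 := by
  rcases subset_or_inter_frontier_nonempty isPreconnected_Iic ⟨x, Set.self_mem_Iic, hx⟩ with
    hsub | ⟨a, hax : a ≤ x, ha⟩
  · refine ge_of_tendsto hbot ?_
    filter_upwards [eventually_le_atBot x] with t ht
    exact hanti (subset_closure (hsub ht)) (subset_closure hx) ht
  · have hψa := hI.eq_zero_of_mem_frontier a ha
    have hlt : a < x := hax.lt_of_ne fun h => hI.ne_zero x hx (h ▸ hψa)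
    have haI := frontier_subset_closure ha
    have hWa := wronskian_mul_sub_nonpos (hψ a) (hφ a) hI.ordConnected.convex.closure hnn haI
      (subset_closure hx) hψa
    exact (hanti haI (subset_closure hx) hax).trans
      (nonpos_of_mul_nonpos_left hWa (sub_pos.2 hlt))

theorem wronskian_nonneg_of_antitoneOn (hψ : Differentiable ℝ ψ) (hφ : Differentiable ℝ φ)
    (hI : IsNodalInterval ψ I) (hnn : ∀ x ∈ closure I, 0 ≤ ψ x * φ x)
    (hanti : AntitoneOn (wronskian ψ φ) (closure I))
    (htop : Tendsto (wronskian ψ φ) atTop (nhds 0)) {x : ℝ} (hx : x ∈ I) :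
    0 ≤ wronskian ψ φ x := by
  rcases subset_or_inter_frontier_nonempty isPreconnected_Ici ⟨x, Set.self_mem_Ici, hx⟩ with
    hsub | ⟨b, hxb : x ≤ b, hb⟩
  · refine le_of_tendsto htop ?_
    filter_upwards [eventually_ge_atTop x] with t ht
    exact hanti (subset_closure hx) (subset_closure (hsub ht)) ht
  · have hψb := hI.eq_zero_of_mem_frontier b hb
    have hlt : x < b := hxb.lt_of_ne fun h => hI.ne_zero x hx (h ▸ hψb)
    have hbI := frontier_subset_closure hb
    have hWb := wronskian_mul_sub_nonpos (hψ b) (hφ b) hI.ordConnected.convex.closure hnn hbI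
      (subset_closure hx) hψb
    exact (nonneg_of_mul_nonpos_left hWb (sub_neg.2 hlt)).trans
      (hanti (subset_closure hx) hbI hxb)

theorem le_eigenvalue_of_mul_nonneg_on_nodalInterval (hψ : ContDiff ℝ 2 ψ) (hφ : ContDiff ℝ 2 φ)
    (hI : IsNodalInterval ψ I) (heq : ∀ x ∈ I, schrodingerOp V ψ x = E * ψ x)
    (hdense : Dense {x | φ x ≠ 0}) (hm : ∀ x ∈ I, φ x ≠ 0 → m ≤ schrodingerOp V φ x / φ x)
    (htop : Tendsto (wronskian ψ φ) atTop (nhds 0)) (hbot : Tendsto (wronskian ψ φ) atBot (nhds 0))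
    (hnn : ∀ x ∈ I, 0 ≤ ψ x * φ x) : m ≤ E := by
  by_contra! hlt
  have hnn_closure : ∀ x ∈ closure I, 0 ≤ ψ x * φ x :=
    fun x hx => le_on_closure hnn continuousOn_const
      (hψ.continuous.mul hφ.continuous).continuousOn hx
  have hle := deriv_wronskian_le_on_closure hψ hφ hI.isOpen hdense heq hm hnn
  have hanti := antitoneOn_wronskian hψ hφ hI.ordConnected.convex.closure hlt.le hnn_closure hle
  have hψ' := hψ.differentiable two_ne_zero
  have hφ' := hφ.differentiable two_ne_zero
  have hW : Set.EqOn (wronskian ψ φ) 0 I := fun x hx =>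
    (wronskian_nonpos_of_antitoneOn hψ' hφ' hI hnn_closure hanti hbot hx).antisymm
      (wronskian_nonneg_of_antitoneOn hψ' hφ' hI hnn_closure hanti htop hx)
  obtain ⟨x, hx, hφx⟩ := hdense.inter_open_nonempty I hI.isOpen hI.nonempty
  have hW'x : deriv (wronskian ψ φ) x = 0 := by
    rw [(hW.eventuallyEq_of_mem (hI.isOpen.mem_nhds hx)).deriv_eq]
    exact deriv_const x 0
  have hpos : 0 < ψ x * φ x := (hnn x hx).lt_of_ne' (mul_ne_zero (hI.ne_zero x hx) hφx)
  have hneg := (hle x (subset_closure hx)).trans_lt (mul_neg_of_neg_of_pos (sub_neg.2 hlt) hpos)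
  exact hneg.ne hW'x

theorem IsNodalInterval.neg (hI : IsNodalInterval ψ I) : IsNodalInterval (-ψ) I where
  isOpen := hI.isOpen
  nonempty := hI.nonempty
  ordConnected := hI.ordConnected
  ne_zero x hx := neg_ne_zero.2 (hI.ne_zero x hx)
  eq_zero_of_mem_frontier x hx := neg_eq_zero.2 (hI.eq_zero_of_mem_frontier x hx)

theorem le_eigenvalue_of_constant_sign_on_nodalInterval (hψ : ContDiff ℝ 2 ψ)
    (hφ : ContDiff ℝ 2 φ) (hI : IsNodalInterval ψ I)
    (heq : ∀ x ∈ I, schrodingerOp V ψ x = E * ψ x) (hdense : Dense {x | φ x ≠ 0})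
    (hm : ∀ x ∈ I, φ x ≠ 0 → m ≤ schrodingerOp V φ x / φ x)
    (htop : Tendsto (wronskian ψ φ) atTop (nhds 0)) (hbot : Tendsto (wronskian ψ φ) atBot (nhds 0))
    (hsign : (∀ x ∈ I, 0 ≤ φ x) ∨ ∀ x ∈ I, φ x ≤ 0) : m ≤ E := by
  have hprod : (∀ x ∈ I, 0 ≤ ψ x * φ x) ∨ ∀ x ∈ I, ψ x * φ x ≤ 0 := by
    rcases forall_pos_or_forall_neg_of_isPreconnected hI.ordConnected.isPreconnected
      hψ.continuous.continuousOn hI.ne_zero with hpos | hneg <;> rcases hsign with hnn | hnp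
    · exact .inl fun x hx => mul_nonneg (hpos x hx).le (hnn x hx)
    · exact .inr fun x hx => mul_nonpos_of_nonneg_of_nonpos (hpos x hx).le (hnp x hx)
    · exact .inr fun x hx => mul_nonpos_of_nonpos_of_nonneg (hneg x hx).le (hnn x hx)
    · exact .inl fun x hx => mul_nonneg_of_nonpos_of_nonpos (hneg x hx).le (hnp x hx)
  rcases hprod with hnn | hnp
  · exact le_eigenvalue_of_mul_nonneg_on_nodalInterval hψ hφ hI heq hdense hm htop hbot hnn
  · refine le_eigenvalue_of_mul_nonneg_on_nodalInterval (ψ := -ψ) hψ.neg hφ hI.neg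
      (fun x hx => ?_) hdense hm ?_ ?_ fun x hx => ?_
    · rw [schrodingerOp_neg, heq x hx, Pi.neg_apply, mul_neg]
    · simpa [wronskian_neg_left] using htop.neg
    · simpa [wronskian_neg_left] using hbot.neg
    · simpa using hnp x hx

end Wronskian

theorem excited_state_local_energy_lower_bound_general {V ψ φ : ℝ → ℝ} {E m : ℝ} {n k : ℕ}
    (hkn : k ≤ n) (hψ : ContDiff ℝ 2 ψ) (heq : ∀ x, schrodingerOp V ψ x = E * ψ x)
    {y : Fin n → ℝ} (hy : StrictMono y) (hyzero : ∀ i, ψ (y i) = 0)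
    (hyall : ∀ x, ψ x = 0 → ∃ i, x = y i)
    (hφ : ContDiff ℝ 2 φ) (hdense : Dense {x | φ x ≠ 0}) {z : Fin k → ℝ} (hz : Monotone z)
    (hφsign : ∀ i, ∀ x ∈ gap z i, 0 ≤ (-1 : ℝ) ^ (i : ℕ) * φ x)
    (htop : Tendsto (wronskian ψ φ) atTop (nhds 0)) (hbot : Tendsto (wronskian ψ φ) atBot (nhds 0))
    (hm : ∀ x, φ x ≠ 0 → m ≤ schrodingerOp V φ x / φ x) : m ≤ E := by
  obtain ⟨i, hi⟩ := exists_disjoint_range_of_card_lt (pairwise_disjoint_gap y) z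
    (by simpa using Nat.lt_succ_of_le hkn)
  have hI := isNodalInterval_gap hy hyzero hyall i
  obtain ⟨l, hl⟩ := exists_subset_gap hz hI.ordConnected hI.nonempty hi
  have hsign : (∀ x ∈ gap y i, 0 ≤ φ x) ∨ ∀ x ∈ gap y i, φ x ≤ 0 := by
    rcases neg_one_pow_eq_or ℝ (l : ℕ) with h | h
    · exact .inl fun x hx => by simpa [h] using hφsign l x (hl hx)
    · exact .inr fun x hx => by simpa [h] using hφsign l x (hl hx)
  exact le_eigenvalue_of_constant_sign_on_nodalInterval hψ hφ hI (fun x _ => heq x) hdense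
    (fun x _ => hm x) htop hbot hsign

/-- Barnsley's excited-state local energy theorem (lower bound): if `ψ` is an
eigenfunction of `H = -d²/dx² + V` with eigenvalue `E` having exactly `n` simple
zeros at each of which it changes sign, and `φ` is a trial function with exactly
`n` sign changes, then any lower bound `m` for the local energy `(Hφ)/φ` (over
points where `φ ≠ 0`) satisfies `m ≤ E`. -/
theorem excited_state_local_energy_lower_bound
    (V : ℝ → ℝ) (hV : Continuous V) (E : ℝ) (n : ℕ) (ψ : ℝ → ℝ)
    (hψC2 : ContDiff ℝ 2 ψ)
    (hψL2 : Integrable (fun x => (ψ x) ^ 2))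
    (hψtop : Tendsto ψ atTop (nhds 0)) (hψbot : Tendsto ψ atBot (nhds 0))
    (hψ'top : Tendsto (deriv ψ) atTop (nhds 0))
    (hψ'bot : Tendsto (deriv ψ) atBot (nhds 0))
    (hψeq : ∀ x, -(deriv (deriv ψ) x) + V x * ψ x = E * ψ x)
    -- ψ has exactly n zeros y₁ < ⋯ < yₙ, each simple, with a sign change at each
    (y : Fin n → ℝ) (hy : StrictMono y)
    (hyzero : ∀ i, ψ (y i) = 0)
    (hyall : ∀ x, ψ x = 0 → ∃ i, x = y i)
    (hysimple : ∀ i, deriv ψ (y i) ≠ 0)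
    (hysign : ∀ i, ∃ ε > 0, ∀ a b : ℝ,
      y i - ε < a → a < y i → y i < b → b < y i + ε → ψ a * ψ b < 0)
    -- φ vanishes only at isolated points and has exactly n sign changes
    (φ : ℝ → ℝ) (hφC2 : ContDiff ℝ 2 φ)
    (hφiso : ∀ x, φ x = 0 → ∃ ε > 0, ∀ z, z ≠ x → |z - x| < ε → φ z ≠ 0)
    (z : Fin n → ℝ) (hz : StrictMono z)
    (hφsign : ∀ (i : Fin (n + 1)) (x : ℝ),
      (∀ j : Fin n, (j : ℕ) < (i : ℕ) → z j < x) →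
      (∀ j : Fin n, (i : ℕ) ≤ (j : ℕ) → x < z j) →
      0 ≤ (-1 : ℝ) ^ (i : ℕ) * φ x)
    (hint1 : Integrable (fun x => ψ x * φ x))
    (hint2 : Integrable (fun x => ψ x * (-(deriv (deriv φ) x) + V x * φ x)))
    (hWtop : Tendsto (fun x => ψ x * deriv φ x - deriv ψ x * φ x) atTop (nhds 0))
    (hWbot : Tendsto (fun x => ψ x * deriv φ x - deriv ψ x * φ x) atBot (nhds 0))
    (m : ℝ)
    (hm : ∀ x, φ x ≠ 0 → m ≤ (-(deriv (deriv φ) x) + V x * φ x) / φ x) :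
    m ≤ E := by
  exact excited_state_local_energy_lower_bound_general le_rfl hψC2 hψeq hy hyzero hyall hφC2
    (dense_ne_zero_of_isolated_zeros hφiso) hz.monotone (fun i x hx => hφsign i x hx.1 hx.2)
    hWtop hWbot hm
end

section
/- Let h : ℝ → ℝ be continuous, let g : ℝ → ℝ be convex, differentiable, and strictly monotone increasing, and set f = g ∘ h. Let v > 0, t ∈ ℝ, ε ∈ ℝ, and set u = v·g'(h(t)). Let φ : ℝ → ℝ be twice continuously differentiable, not identically zero, vanishing only at isolated points, and satisfying −φ''(x) + u·h(x)·φ(x) = ε·φ(x) for all x. Then the infimum, over all x with φ(x) ≠ 0, of the local energy (−φ''(x) + v·f(x)·φ(x))/φ(x) equals v·(g(h(t)) − g'(h(t))·h(t)) + ε. In particular, the local-energy lower bound obtained from the trial function φ coincides with the envelope-theory lower bound v·a(t) + ε, where a(t) = g(h(t)) − g'(h(t))·h(t). -/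
/-!
Subtracting the eigenvalue equation `Tφ + W φ = ε φ` turns the local energy of the potential `V` in
the trial function `φ` into `V - W + ε`, so minimising it amounts to minimising `V - W`. For
`V = v · (g ∘ h)` and `W = v g'(h t) · h`, convexity places `V` above its tangential potential
`W + v a(t)`, with contact at `t`. If `t` is a node of `φ` the minimum need not be attained, but it
is still the infimum as soon as `t` is a limit of points where `φ` does not vanish.
-/

open Filter Function Set Topology

/-- The local energy `(Hφ)(x) / φ(x)` of `H = T + V` in the trial function `φ`. The kinetic part
enters only through the function `Tφ`, which is `-φ''` for `T = -d²/dx²`. At a zero of `φ` it has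
the junk value `0`. -/
noncomputable def localEnergy {X : Type*} (Tφ V φ : X → ℝ) (x : X) : ℝ :=
  (Tφ x + V x * φ x) / φ x

theorem isGLB_image_of_mem_closure {X α : Type*} [TopologicalSpace X] [TopologicalSpace α]
    [LinearOrder α] [OrderTopology α] {F : X → α} {s : Set X} {t : X}
    (hF : ContinuousWithinAt F s t) (ht : t ∈ closure s) (hmin : ∀ x ∈ s, F t ≤ F x) :
    IsGLB (F '' s) (F t) :=
  isGLB_of_mem_closure (forall_mem_image.2 hmin) (hF.mem_closure_image ht)

theorem mem_closure_support_of_isolated_zero {X M : Type*} [TopologicalSpace X] [Zero M]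
    {φ : X → M} {t : X} [(𝓝[≠] t).NeBot] (hφ : φ t = 0 → ∀ᶠ x in 𝓝[≠] t, φ x ≠ 0) :
    t ∈ closure (support φ) := by
  by_cases ht : φ t = 0
  · exact mem_closure_iff_frequently.2 ((hφ ht).frequently.filter_mono nhdsWithin_le_nhds)
  · exact subset_closure ht

theorem tangent_le_of_convexOn {g : ℝ → ℝ} {g' a y : ℝ} {S : Set ℝ} (hg : ConvexOn ℝ S g)
    (ha : a ∈ S) (hy : y ∈ S) (hg' : HasDerivWithinAt g g' S a) :
    g a + g' * (y - a) ≤ g y := by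
  rcases lt_trichotomy a y with hay | rfl | hya
  · have hslope := hg.le_slope_of_hasDerivWithinAt ha hy hay hg'
    rw [slope_def_field, le_div_iff₀ (sub_pos.2 hay)] at hslope
    linarith
  · simp
  · have hslope := hg.slope_le_of_hasDerivWithinAt hy ha hya hg'
    rw [slope_def_field, div_le_iff₀ (sub_pos.2 hya)] at hslope
    linarith

section LocalEnergy

variable {X : Type*} {Tφ V W φ : X → ℝ} {ε : ℝ}

theorem localEnergy_eq_of_eigenfunction {x : X} (hx : φ x ≠ 0)
    (heig : Tφ x + W x * φ x = ε * φ x) :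
    localEnergy Tφ V φ x = V x - W x + ε := by
  rw [localEnergy, div_eq_iff hx]
  linear_combination heig

theorem isGLB_localEnergy_of_eigenfunction [TopologicalSpace X] {t : X}
    (heig : ∀ x ∈ support φ, Tφ x + W x * φ x = ε * φ x)
    (hcont : ContinuousWithinAt (fun x ↦ V x - W x) (support φ) t)
    (ht : t ∈ closure (support φ))
    (hmin : ∀ x ∈ support φ, V t - W t ≤ V x - W x) :
    IsGLB (localEnergy Tφ V φ '' support φ) (V t - W t + ε) := by
  have henergy : EqOn (localEnergy Tφ V φ) (fun x ↦ V x - W x + ε) (support φ) :=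
    fun x hx ↦ localEnergy_eq_of_eigenfunction hx (heig x hx)
  rw [henergy.image_eq]
  exact isGLB_image_of_mem_closure (hcont.add_const ε) ht fun x hx ↦
    add_le_add (hmin x hx) le_rfl

theorem local_energy_envelope_coincidence_convex_general [TopologicalSpace X] {h : X → ℝ}
    {g : ℝ → ℝ} {S : Set ℝ} {t : X} {g' v : ℝ}
    (hh : ContinuousWithinAt h (support φ) t) (hhS : MapsTo h (support φ) S) (htS : h t ∈ S)
    (hg : ConvexOn ℝ S g) (hg' : HasDerivWithinAt g g' S (h t)) (hv : 0 ≤ v)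
    (ht : t ∈ closure (support φ))
    (heig : ∀ x ∈ support φ, Tφ x + v * g' * h x * φ x = ε * φ x) :
    IsGLB (localEnergy Tφ (fun x ↦ v * g (h x)) φ '' support φ)
      (v * (g (h t) - g' * h t) + ε) := by
  have hgh : ContinuousWithinAt (fun x ↦ g (h x)) (support φ) t :=
    hg'.continuousWithinAt.comp hh hhS
  have hcont : ContinuousWithinAt (fun x ↦ v * g (h x) - v * g' * h x) (support φ) t :=
    (hgh.const_mul v).sub (hh.const_mul (v * g'))
  have hmin : ∀ x ∈ support φ,
      v * g (h t) - v * g' * h t ≤ v * g (h x) - v * g' * h x := fun x hx ↦ by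
    have htangent := tangent_le_of_convexOn hg htS (hhS hx) hg'
    linarith [mul_le_mul_of_nonneg_left htangent hv]
  convert isGLB_localEnergy_of_eigenfunction heig hcont ht hmin using 1
  ring

end LocalEnergy

/-- Coincidence theorem (convex case): if `φ` is an eigenfunction of the base
operator `-d²/dx² + u·h` with eigenvalue `ε`, where `u = v·g'(h(t))` and
`f = g ∘ h` with `g` convex and increasing, then the infimum of the local energy
`(-φ'' + v·f·φ)/φ` over points where `φ ≠ 0` equals the envelope lower bound
`v·a(t) + ε` with `a(t) = g(h(t)) − g'(h(t))·h(t)`. -/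
theorem local_energy_envelope_coincidence_convex
    (h g : ℝ → ℝ) (hh : Continuous h)
    (hgconv : ConvexOn ℝ Set.univ g) (hgdiff : Differentiable ℝ g)
    (hgmono : StrictMono g)
    (f : ℝ → ℝ) (hf : f = g ∘ h)
    (v t ε : ℝ) (hv : 0 < v)
    (u : ℝ) (hu : u = v * deriv g (h t))
    (φ : ℝ → ℝ) (hφC2 : ContDiff ℝ 2 φ)
    (hφne : ∃ x, φ x ≠ 0)
    (hφiso : ∀ x, φ x = 0 → ∃ δ > 0, ∀ w, w ≠ x → |w - x| < δ → φ w ≠ 0)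
    (hφeq : ∀ x, -(deriv (deriv φ) x) + u * h x * φ x = ε * φ x) :
    (⨅ x : {x : ℝ // φ x ≠ 0},
        (-(deriv (deriv φ) (x : ℝ)) + v * f (x : ℝ) * φ (x : ℝ)) / φ (x : ℝ)) =
      v * (g (h t) - deriv g (h t) * h t) + ε := by
  subst hf hu
  have ht : t ∈ closure (support φ) := mem_closure_support_of_isolated_zero fun h0 ↦ by
    obtain ⟨δ, hδ, hne⟩ := hφiso t h0
    exact eventually_nhdsWithin_iff.2
      (Metric.eventually_nhds_iff.2 ⟨δ, hδ, fun w hw hwt ↦ hne w hwt hw⟩)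
  exact (local_energy_envelope_coincidence_convex_general hh.continuousWithinAt
    (mapsTo_univ _ _) (mem_univ _) hgconv (hgdiff _).hasDerivAt.hasDerivWithinAt hv.le ht
    fun x _ ↦ hφeq x).ciInf_set_eq hφne
end
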